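/- Let B be the open unit ball of ℝ⁴. Let Λ > 0, let (ρ_k) be a sequence of reals with 0 < ρ_k ≤ Λ, and let (u_k) be a sequence of solutions of the Dirichlet mean field problem on B with parameters ρ_k. Then the quantities α_k := log( (∫_B exp(u_k(x)) dx) / ρ_k ) are bounded from below: there exists a constant c > 0 such that ∫_B exp(u_k(x)) dx ≥ c·ρ_k for all k. -/

import Mathlib

open MeasureTheory Metric Filter

noncomputable section

/-- The Laplacian of `f : ℝ⁴ → ℝ` at `x`: the trace of the second derivative. -/
def lap (f : EuclideanSpace ℝ (Fin 4) → ℝ) (x : EuclideanSpace ℝ (Fin 4)) : ℝ :=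
  ∑ i : Fin 4,
    fderiv ℝ (fun y => fderiv ℝ f y (EuclideanSpace.single i (1:ℝ))) x
      (EuclideanSpace.single i (1:ℝ))

/-- `u` is a solution of the Dirichlet mean field problem on the open unit ball of `ℝ⁴`
with parameter `ρ`. -/
def IsMFSolution (ρ : ℝ) (u : EuclideanSpace ℝ (Fin 4) → ℝ) : Prop :=
  ContDiffOn ℝ 4 u (closedBall (0 : EuclideanSpace ℝ (Fin 4)) 1) ∧
  (∀ x ∈ ball (0 : EuclideanSpace ℝ (Fin 4)) 1,
    lap (lap u) x
      = ρ * Real.exp (u x) /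
          ∫ y in ball (0 : EuclideanSpace ℝ (Fin 4)) 1, Real.exp (u y)) ∧
  (∀ x : EuclideanSpace ℝ (Fin 4), ‖x‖ = 1 →
    u x = 0 ∧ fderivWithin ℝ u (closedBall (0 : EuclideanSpace ℝ (Fin 4)) 1) x = 0)

/-
By Green's second identity, `∫ v Δ²u = ∫ u Δ²v` over the unit ball for clamped `u` and `v`. For
`v = (1 - ‖x‖²)² ≥ 0` the bilaplacian is a positive constant, so `Δ²u ≥ 0` forces `∫ u ≥ 0`, and
`exp u ≥ 1 + u` bounds `∫ exp u` from below by the volume of the ball.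

The identity needs no boundary integrals: a `C¹` function on a compact convex set vanishing on the
boundary stays Lipschitz when extended by zero, so the integrals of its partial derivatives vanish.
-/

section MeanFieldBound

open Set Module InnerProductSpace
open scoped Topology Laplacian

section ZeroExtension

theorem nonempty_inter_frontier_of_isPreconnected {X : Type*} [TopologicalSpace X] {s t : Set X}
    (ht : IsPreconnected t) (hst : (t ∩ s).Nonempty) (hts : ¬t ⊆ s) :
    (t ∩ frontier s).Nonempty := by
  obtain ⟨x, hxt, hxs⟩ := hst
  by_contra! h
  have hfrontier (z : X) (hz : z ∈ t) : z ∉ frontier s := fun hzs =>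
    notMem_empty z (h.subset ⟨hz, hzs⟩)
  refine hts (Subset.trans ?_ interior_subset)
  refine ht.subset_of_closure_inter_subset isOpen_interior ⟨x, hxt, ?_⟩ ?_
  · by_contra hxi
    exact hfrontier x hxt ⟨subset_closure hxs, hxi⟩
  · rintro z ⟨hz, hzt⟩
    by_contra hzi
    exact hfrontier z hzt ⟨closure_mono interior_subset hz, hzi⟩

variable {E F : Type*} [NormedAddCommGroup E] [NormedSpace ℝ E] [NormedAddCommGroup F] {s : Set E}
  {f : E → F}

theorem lipschitzWith_indicator_of_eqOn_frontier {K : NNReal} (hs : IsClosed s)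
    (hf : LipschitzOnWith K f s) (h0 : EqOn f 0 (frontier s)) :
    LipschitzWith K (s.indicator f) := by
  have crossing {x y : E} (hx : x ∈ s) (hy : y ∉ s) :
      dist (s.indicator f x) (s.indicator f y) ≤ K * dist x y := by
    obtain ⟨z, hzxy, hz⟩ := nonempty_inter_frontier_of_isPreconnected
      (convex_segment x y).isPreconnected ⟨x, left_mem_segment ℝ x y, hx⟩
      (fun h => hy (h (right_mem_segment ℝ x y)))
    calc dist (s.indicator f x) (s.indicator f y) = dist (f x) (f z) := by
          rw [indicator_of_mem hx, indicator_of_notMem hy, h0 hz, Pi.zero_apply]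
      _ ≤ K * dist x z := hf.dist_le_mul x hx z (hs.frontier_subset hz)
      _ ≤ K * dist x y := by
          gcongr
          exact dist_comm x z ▸ mem_closedBall.1 (segment_subset_closedBall_left x y hzxy)
  refine LipschitzWith.of_dist_le_mul fun x y => ?_
  by_cases hx : x ∈ s <;> by_cases hy : y ∈ s
  · simpa only [indicator_of_mem, hx, hy] using hf.dist_le_mul x hx y hy
  · exact crossing hx hy
  · rw [dist_comm, dist_comm x]
    exact crossing hy hx
  · rw [indicator_of_notMem hx, indicator_of_notMem hy, dist_self]
    positivity

variable [NormedSpace ℝ F]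

theorem exists_lipschitzWith_indicator_of_contDiffOn (hs : Convex ℝ s) (hsc : IsCompact s)
    (hf : ContDiffOn ℝ 1 f s) (h0 : EqOn f 0 (frontier s)) :
    ∃ K, LipschitzWith K (s.indicator f) := by
  have hloc : LocallyLipschitzOn s f := fun x hx => (hf x hx).exists_lipschitzOnWith hs
  obtain ⟨K, hK⟩ := hloc.exists_lipschitzOnWith_of_compact hsc
  exact ⟨K, lipschitzWith_indicator_of_eqOn_frontier hsc.isClosed hK h0⟩

end ZeroExtension

section IntegrationByParts

variable {E : Type*} [NormedAddCommGroup E] [NormedSpace ℝ E] {s : Set E} {f g : E → ℝ}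

/-- The homogeneous Dirichlet condition of fourth-order problems on `s` (a clamped plate): `f` and
its differential vanish on the boundary. The differential is taken within `s`, since `f` is only
prescribed there. -/
def IsClamped (s : Set E) (f : E → ℝ) : Prop :=
  ∀ x ∈ frontier s, f x = 0 ∧ fderivWithin ℝ f s x = 0

variable [FiniteDimensional ℝ E] [MeasurableSpace E] [BorelSpace E] {μ : Measure E}
  [μ.IsAddHaarMeasure]

theorem integral_lineDeriv_eq_zero_of_hasCompactSupport {K : NNReal} (hf : LipschitzWith K f)
    (hfc : HasCompactSupport f) (v : E) : ∫ x, lineDeriv ℝ f x v ∂μ = 0 := by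
  have hone : LipschitzWith 0 fun _ : E => (1 : ℝ) := LipschitzWith.const 1
  simpa [lineDeriv] using (hone.integral_lineDeriv_mul_eq (μ := μ) hf hfc (-v)).symm

theorem lineDeriv_indicator_ae_eq {F : Type*} [NormedAddCommGroup F] [NormedSpace ℝ F] {f : E → F}
    (hs : Convex ℝ s) (hf : DifferentiableOn ℝ f s) (v : E) :
    (fun x => lineDeriv ℝ (s.indicator f) x v) =ᵐ[μ]
      s.indicator fun x => fderivWithin ℝ f s x v := by
  filter_upwards [measure_eq_zero_iff_ae_notMem.1 (hs.addHaar_frontier μ)] with x hx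
  by_cases hxs : x ∈ s
  · have hnhds : s ∈ 𝓝 x := by
      by_contra h
      exact hx ⟨subset_closure hxs, mt mem_interior_iff_mem_nhds.1 h⟩
    have heq : s.indicator f =ᶠ[𝓝 x] f := eqOn_indicator.eventuallyEq_of_mem hnhds
    rw [indicator_of_mem hxs, heq.lineDeriv_eq,
      ((hf x hxs).differentiableAt hnhds).lineDeriv_eq_fderiv, fderivWithin_of_mem_nhds hnhds]
  · have hnhds : sᶜ ∈ 𝓝 x := by
      rw [← mem_interior_iff_mem_nhds, interior_compl]
      exact fun hxc => hx ⟨hxc, fun hxi => hxs (interior_subset hxi)⟩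
    have heq : s.indicator f =ᶠ[𝓝 x] fun _ => 0 :=
      eqOn_indicator'.eventuallyEq_of_mem hnhds
    rw [indicator_of_notMem hxs, heq.lineDeriv_eq]
    simp only [lineDeriv, deriv_const]

theorem integral_fderivWithin_eq_zero (hs : Convex ℝ s) (hsc : IsCompact s)
    (hf : ContDiffOn ℝ 1 f s) (h0 : EqOn f 0 (frontier s)) (v : E) :
    ∫ x in s, fderivWithin ℝ f s x v ∂μ = 0 := by
  obtain ⟨K, hK⟩ := exists_lipschitzWith_indicator_of_contDiffOn hs hsc hf h0
  have hsupp : HasCompactSupport (s.indicator f) :=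
    HasCompactSupport.intro hsc fun _ hx => indicator_of_notMem hx f
  rw [← integral_indicator hsc.measurableSet, ← integral_congr_ae
    (lineDeriv_indicator_ae_eq hs (hf.differentiableOn one_ne_zero) v)]
  exact integral_lineDeriv_eq_zero_of_hasCompactSupport hK hsupp v

theorem integral_mul_fderivWithin_eq_neg (hs : Convex ℝ s) (hsc : IsCompact s)
    (hsu : UniqueDiffOn ℝ s) (hf : ContDiffOn ℝ 1 f s) (hg : ContDiffOn ℝ 1 g s)
    (h0 : EqOn (f * g) 0 (frontier s)) (v : E) :
    ∫ x in s, f x * fderivWithin ℝ g s x v ∂μ = -∫ x in s, fderivWithin ℝ f s x v * g x ∂μ := by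
  have hderiv {h : E → ℝ} (hh : ContDiffOn ℝ 1 h s) :
      ContinuousOn (fun x => fderivWithin ℝ h s x v) s :=
    (hh.continuousOn_fderivWithin hsu le_rfl).clm_apply continuousOn_const
  have hprod : EqOn (fun x => fderivWithin ℝ (fun y => f y * g y) s x v)
      (fun x => f x * fderivWithin ℝ g s x v + fderivWithin ℝ f s x v * g x) s := fun x hx => by
    simp [fderivWithin_fun_mul (hsu x hx) (hf.differentiableOn one_ne_zero x hx)
      (hg.differentiableOn one_ne_zero x hx), mul_comm]
  have hint_left : IntegrableOn (fun x => f x * fderivWithin ℝ g s x v) s μ :=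
    (hf.continuousOn.mul (hderiv hg)).integrableOn_compact hsc
  have hint_right : IntegrableOn (fun x => fderivWithin ℝ f s x v * g x) s μ :=
    ((hderiv hf).mul hg.continuousOn).integrableOn_compact hsc
  rw [eq_neg_iff_add_eq_zero, ← integral_add hint_left hint_right,
    ← setIntegral_congr_fun hsc.measurableSet hprod]
  exact integral_fderivWithin_eq_zero hs hsc (hf.mul hg) h0 v

theorem IsClamped.integral_mul_fderivWithin_fderivWithin (hs : Convex ℝ s) (hsc : IsCompact s)
    (hsu : UniqueDiffOn ℝ s) (hf : ContDiffOn ℝ 2 f s) (hg : ContDiffOn ℝ 2 g s)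
    (h0 : IsClamped s f) (v : E) :
    ∫ x in s, f x * fderivWithin ℝ (fun y => fderivWithin ℝ g s y v) s x v ∂μ =
      ∫ x in s, fderivWithin ℝ (fun y => fderivWithin ℝ f s y v) s x v * g x ∂μ := by
  have hderiv {h : E → ℝ} (hh : ContDiffOn ℝ 2 h s) :
      ContDiffOn ℝ 1 (fun x => fderivWithin ℝ h s x v) s :=
    (hh.fderivWithin hsu (by norm_num)).clm_apply contDiffOn_const
  have hf1 := hf.of_le one_le_two
  have hg1 := hg.of_le one_le_two
  rw [integral_mul_fderivWithin_eq_neg hs hsc hsu hf1 (hderiv hg)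
      (fun x hx => by simp [(h0 x hx).1]),
    integral_mul_fderivWithin_eq_neg hs hsc hsu (hderiv hf) hg1
      (fun x hx => by simp [(h0 x hx).2]), neg_neg]

end IntegrationByParts

theorem uniqueDiffOn_closedBall {E : Type*} [NormedAddCommGroup E] [NormedSpace ℝ E] (c : E)
    {r : ℝ} (hr : 0 < r) : UniqueDiffOn ℝ (closedBall c r) :=
  uniqueDiffOn_convex (convex_closedBall c r)
    ((nonempty_ball.2 hr).mono ball_subset_interior_closedBall)

section PlateDeflection

variable {E : Type*} [NormedAddCommGroup E] [InnerProductSpace ℝ E]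

variable (E) in
/-- Up to a constant factor, the deflection of the clamped unit ball under a uniform load: the
clamped function whose bilaplacian is constant. -/
def plateDeflection (x : E) : ℝ := (1 - ‖x‖ ^ 2) ^ 2

theorem contDiff_plateDeflection {n : WithTop ℕ∞} : ContDiff ℝ n (plateDeflection E) :=
  (contDiff_const.sub (contDiff_norm_sq ℝ)).pow 2

theorem isClamped_plateDeflection : IsClamped (closedBall (0 : E) 1) (plateDeflection E) := by
  intro x hx
  rw [frontier_closedBall _ one_ne_zero, mem_sphere_zero_iff_norm] at hx
  have hderiv : HasFDerivAt (plateDeflection E) 0 x :=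
    (((hasStrictFDerivAt_norm_sq x).hasFDerivAt.const_sub 1).pow 2).congr_fderiv (by simp [hx])
  exact ⟨by simp [plateDeflection, hx], hderiv.hasFDerivWithinAt.fderivWithin
    (uniqueDiffOn_closedBall 0 one_pos x (by simp [hx]))⟩

end PlateDeflection

section Laplacian

variable {E : Type*} [NormedAddCommGroup E] [InnerProductSpace ℝ E] [FiniteDimensional ℝ E]
  {s : Set E} {f g : E → ℝ} {x : E}

section VectorValued

variable {F : Type*} [NormedAddCommGroup F] [NormedSpace ℝ F] {f : E → F}

theorem laplacianWithin_eq_sum_fderivWithin {ι : Type*} [Fintype ι] (b : OrthonormalBasis ι ℝ E)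
    (hf : ContDiffWithinAt ℝ 2 f s x) (hs : UniqueDiffOn ℝ s) (hx : x ∈ s) :
    (Δ[s] f) x = ∑ i, fderivWithin ℝ (fun y => fderivWithin ℝ f s y (b i)) s x (b i) := by
  have hdiff : DifferentiableWithinAt ℝ (fderivWithin ℝ f s) s x :=
    (hf.fderivWithin_right (m := 1) hs (by norm_num) hx).differentiableWithinAt one_ne_zero
  rw [laplacianWithin_eq_iteratedFDerivWithin_orthonormalBasis f hs hx b]
  refine Finset.sum_congr rfl fun i _ => ?_
  rw [iteratedFDerivWithin_two_apply' f hs hx,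
    fderivWithin_clm_apply (hs x hx) hdiff (differentiableWithinAt_const _)]
  simp

theorem contDiffWithinAt_laplacianWithin {m n : WithTop ℕ∞} (hf : ContDiffWithinAt ℝ n f s x)
    (hs : UniqueDiffOn ℝ s) (hx : x ∈ s) (hmn : m + 2 ≤ n) :
    ContDiffWithinAt ℝ m (Δ[s] f) s x := by
  have hD : ContDiffWithinAt ℝ m (iteratedFDerivWithin ℝ 2 f s) s x :=
    hf.iteratedFDerivWithin_right hs hmn hx
  have hsum : ContDiffWithinAt ℝ m (fun y => ∑ i, iteratedFDerivWithin ℝ 2 f s y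
      ![stdOrthonormalBasis ℝ E i, stdOrthonormalBasis ℝ E i]) s x :=
    ContDiffWithinAt.sum fun i _ =>
      (ContinuousMultilinearMap.apply ℝ (fun _ : Fin 2 => E) F
        ![stdOrthonormalBasis ℝ E i, stdOrthonormalBasis ℝ E i]).contDiff.comp_contDiffWithinAt hD
  exact hsum.congr
    (fun y hy => laplacianWithin_eq_iteratedFDerivWithin_stdOrthonormalBasis f hs hy)
    (laplacianWithin_eq_iteratedFDerivWithin_stdOrthonormalBasis f hs hx)

theorem laplacianWithin_of_mem_nhds (f : E → F) (hs : s ∈ 𝓝 x) : (Δ[s] f) x = Δ f x := by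
  simp only [laplacianWithin, tensorIteratedFDerivWithinTwo, bilinearIteratedFDerivWithinTwo,
    fderivWithin_fderivWithin_eq_of_mem_nhds hs]
  rfl

theorem laplacianWithin_laplacianWithin_of_mem_nhds (f : E → F) (hs : s ∈ 𝓝 x) :
    (Δ[s] (Δ[s] f)) x = Δ (Δ f) x := by
  have heq : Δ[s] f =ᶠ[𝓝 x] Δ f :=
    (eventually_mem_nhds_iff.2 hs).mono fun y => laplacianWithin_of_mem_nhds f
  rw [laplacianWithin_of_mem_nhds _ hs, (laplacian_congr_nhds heq).eq_of_nhds]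

end VectorValued

theorem laplacian_comp_norm_sq {φ φ' : ℝ → ℝ} {c : ℝ}
    (hφ : ∀ᶠ t in 𝓝 (‖x‖ ^ 2), HasDerivAt φ (φ' t) t) (hφ' : HasDerivAt φ' c (‖x‖ ^ 2)) :
    Δ (fun y : E => φ (‖y‖ ^ 2)) x = 4 * ‖x‖ ^ 2 * c + 2 * finrank ℝ E * φ' (‖x‖ ^ 2) := by
  have hnorm (y : E) : HasFDerivAt (fun y : E => ‖y‖ ^ 2) (2 • innerSL ℝ y) y :=
    (hasStrictFDerivAt_norm_sq y).hasFDerivAt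
  have hfst : fderiv ℝ (fun y : E => φ (‖y‖ ^ 2)) =ᶠ[𝓝 x]
      fun y => φ' (‖y‖ ^ 2) • (2 • innerSL ℝ y) :=
    ((hnorm x).continuousAt.eventually hφ).mono fun y hy => (hy.comp_hasFDerivAt y (hnorm y)).fderiv
  have hsnd : HasFDerivAt (fun y : E => φ' (‖y‖ ^ 2) • (2 • innerSL ℝ y)) _ x :=
    (hφ'.comp_hasFDerivAt x (hnorm x)).smul ((innerSL ℝ (E := E)).hasFDerivAt.const_smul 2)
  have hsecond (v : E) : iteratedFDeriv ℝ 2 (fun y : E => φ (‖y‖ ^ 2)) x ![v, v] =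
      4 * c * inner ℝ x v ^ 2 + 2 * φ' (‖x‖ ^ 2) * ‖v‖ ^ 2 := by
    rw [iteratedFDeriv_two_apply, hfst.fderiv_eq, hsnd.fderiv]
    simp only [Function.comp_apply, Matrix.cons_val_zero, Matrix.cons_val_one,
      Matrix.cons_val_fin_one, add_apply, smul_apply, ContinuousLinearMap.smulRight_apply,
      innerSL_apply_apply ℝ x v, innerSL_apply_apply ℝ v v, real_inner_self_eq_norm_sq,
      nsmul_eq_mul, Nat.cast_ofNat, smul_eq_mul]
    ring
  rw [laplacian_eq_iteratedFDeriv_stdOrthonormalBasis]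
  simp only [hsecond, Finset.sum_add_distrib, ← Finset.mul_sum, OrthonormalBasis.sum_sq_inner_left,
    OrthonormalBasis.norm_eq_one, one_pow, Finset.sum_const, Finset.card_univ, Fintype.card_fin,
    nsmul_eq_mul, mul_one]
  ring

theorem laplacian_plateDeflection (x : E) :
    Δ (plateDeflection E) x = 8 * ‖x‖ ^ 2 - 4 * finrank ℝ E * (1 - ‖x‖ ^ 2) := by
  have hφ (t : ℝ) : HasDerivAt (fun t : ℝ => (1 - t) ^ 2) (-2 * (1 - t)) t :=
    (((hasDerivAt_id' t).const_sub 1).pow 2).congr_deriv (by norm_num)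
  have hφ' : HasDerivAt (fun t : ℝ => -2 * (1 - t)) 2 (‖x‖ ^ 2) :=
    (((hasDerivAt_id' _).const_sub 1).const_mul (-2)).congr_deriv (by norm_num)
  refine (laplacian_comp_norm_sq (.of_forall hφ) hφ').trans ?_
  ring

theorem laplacian_laplacian_plateDeflection (x : E) :
    Δ (Δ (plateDeflection E)) x = 8 * finrank ℝ E * (finrank ℝ E + 2) := by
  have hφ (t : ℝ) : HasDerivAt (fun t : ℝ => 8 * t - 4 * finrank ℝ E * (1 - t))
      (8 + 4 * finrank ℝ E) t :=
    (((hasDerivAt_id' t).const_mul 8).sub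
      (((hasDerivAt_id' t).const_sub 1).const_mul _)).congr_deriv (by ring)
  rw [funext laplacian_plateDeflection,
    laplacian_comp_norm_sq (.of_forall hφ) (hasDerivAt_const _ _)]
  ring

section Green

variable [MeasurableSpace E] [BorelSpace E] {μ : Measure E} [μ.IsAddHaarMeasure]

theorem IsClamped.integral_mul_laplacianWithin (hs : Convex ℝ s) (hsc : IsCompact s)
    (hsu : UniqueDiffOn ℝ s) (hf : ContDiffOn ℝ 2 f s) (hg : ContDiffOn ℝ 2 g s)
    (h0 : IsClamped s f) :
    ∫ x in s, f x * (Δ[s] g) x ∂μ = ∫ x in s, (Δ[s] f) x * g x ∂μ := by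
  let b := stdOrthonormalBasis ℝ E
  have hcont {h : E → ℝ} (hh : ContDiffOn ℝ 2 h s) (v : E) :
      ContinuousOn (fun x => fderivWithin ℝ (fun y => fderivWithin ℝ h s y v) s x v) s :=
    (((hh.fderivWithin hsu (by norm_num)).clm_apply contDiffOn_const).continuousOn_fderivWithin
      hsu le_rfl).clm_apply continuousOn_const
  calc ∫ x in s, f x * (Δ[s] g) x ∂μ
      = ∫ x in s, ∑ i, f x * fderivWithin ℝ (fun y => fderivWithin ℝ g s y (b i)) s x (b i) ∂μ :=
        setIntegral_congr_fun hsc.measurableSet fun x hx => by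
          rw [laplacianWithin_eq_sum_fderivWithin b (hg x hx) hsu hx, Finset.mul_sum]
    _ = ∑ i, ∫ x in s, f x * fderivWithin ℝ (fun y => fderivWithin ℝ g s y (b i)) s x (b i) ∂μ :=
        integral_finsetSum _ fun i _ =>
          (hf.continuousOn.mul (hcont hg (b i))).integrableOn_compact hsc
    _ = ∑ i, ∫ x in s, fderivWithin ℝ (fun y => fderivWithin ℝ f s y (b i)) s x (b i) * g x ∂μ :=
        Finset.sum_congr rfl fun i _ =>
          h0.integral_mul_fderivWithin_fderivWithin hs hsc hsu hf hg (b i)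
    _ = ∫ x in s, ∑ i, fderivWithin ℝ (fun y => fderivWithin ℝ f s y (b i)) s x (b i) * g x ∂μ :=
        (integral_finsetSum _ fun i _ =>
          ((hcont hf (b i)).mul hg.continuousOn).integrableOn_compact hsc).symm
    _ = ∫ x in s, (Δ[s] f) x * g x ∂μ :=
        setIntegral_congr_fun hsc.measurableSet fun x hx => by
          rw [laplacianWithin_eq_sum_fderivWithin b (hf x hx) hsu hx, Finset.sum_mul]

theorem IsClamped.setIntegral_interior_mul_bilaplacian_comm (hs : Convex ℝ s) (hsc : IsCompact s)
    (hsu : UniqueDiffOn ℝ s) (hf : ContDiffOn ℝ 4 f s) (hg : ContDiffOn ℝ 4 g s)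
    (hf0 : IsClamped s f) (hg0 : IsClamped s g) :
    ∫ x in interior s, f x * Δ (Δ g) x ∂μ = ∫ x in interior s, g x * Δ (Δ f) x ∂μ := by
  have hlap {h : E → ℝ} (hh : ContDiffOn ℝ 4 h s) : ContDiffOn ℝ 2 (Δ[s] h) s :=
    fun x hx => contDiffWithinAt_laplacianWithin (hh x hx) hsu hx (by norm_num)
  have hf2 : ContDiffOn ℝ 2 f s := hf.of_le (by norm_num)
  have hg2 : ContDiffOn ℝ 2 g s := hg.of_le (by norm_num)
  have hinterior (h k : E → ℝ) : ∫ x in interior s, h x * Δ (Δ k) x ∂μ =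
      ∫ x in s, h x * (Δ[s] (Δ[s] k)) x ∂μ := by
    rw [← setIntegral_congr_set (interior_ae_eq_of_null_frontier (hs.addHaar_frontier μ))]
    refine setIntegral_congr_fun isOpen_interior.measurableSet fun x hx => ?_
    simp only [laplacianWithin_laplacianWithin_of_mem_nhds k (mem_interior_iff_mem_nhds.1 hx)]
  calc ∫ x in interior s, f x * Δ (Δ g) x ∂μ
      = ∫ x in s, (Δ[s] f) x * (Δ[s] g) x ∂μ := by
        rw [hinterior, hf0.integral_mul_laplacianWithin hs hsc hsu hf2 (hlap hg)]
    _ = ∫ x in s, (Δ[s] g) x * (Δ[s] f) x ∂μ := by simp only [mul_comm]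
    _ = ∫ x in interior s, g x * Δ (Δ f) x ∂μ := by
        rw [hinterior, hg0.integral_mul_laplacianWithin hs hsc hsu hg2 (hlap hf)]

end Green

end Laplacian

theorem measureReal_univ_le_integral_exp {α : Type*} [MeasurableSpace α] {μ : Measure α}
    [IsFiniteMeasure μ] {u : α → ℝ} (hu : Integrable u μ)
    (hexp : Integrable (fun x => Real.exp (u x)) μ) (h : 0 ≤ ∫ x, u x ∂μ) :
    μ.real univ ≤ ∫ x, Real.exp (u x) ∂μ :=
  calc μ.real univ ≤ (∫ x, u x ∂μ) + μ.real univ := le_add_of_nonneg_left h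
    _ = ∫ x, (u x + 1) ∂μ := by
        rw [integral_add hu (integrable_const 1), integral_const, smul_eq_mul, mul_one]
    _ ≤ ∫ x, Real.exp (u x) ∂μ :=
        integral_mono (hu.add (integrable_const 1)) hexp fun x => Real.add_one_le_exp (u x)

section MeanField

variable {E : Type*} [NormedAddCommGroup E] [InnerProductSpace ℝ E] [FiniteDimensional ℝ E]
  [MeasurableSpace E] [BorelSpace E] {u : E → ℝ}

section Haar

variable {μ : Measure E} [μ.IsAddHaarMeasure]

theorem IsClamped.integral_plateDeflection_mul_bilaplacian
    (hu : ContDiffOn ℝ 4 u (closedBall 0 1)) (h0 : IsClamped (closedBall 0 1) u) :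
    ∫ x in ball 0 1, plateDeflection E x * Δ (Δ u) x ∂μ =
      8 * finrank ℝ E * (finrank ℝ E + 2) * ∫ x in ball 0 1, u x ∂μ := by
  have hgreen := isClamped_plateDeflection.setIntegral_interior_mul_bilaplacian_comm (μ := μ)
    (convex_closedBall 0 1) (isCompact_closedBall 0 1) (uniqueDiffOn_closedBall 0 one_pos)
    contDiff_plateDeflection.contDiffOn hu h0
  simpa only [interior_closedBall _ one_ne_zero, laplacian_laplacian_plateDeflection,
    integral_mul_const, mul_comm] using hgreen

theorem IsClamped.integral_ball_nonneg [Nontrivial E] (hu : ContDiffOn ℝ 4 u (closedBall 0 1))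
    (h0 : IsClamped (closedBall 0 1) u) (hΔ : ∀ x ∈ ball 0 1, 0 ≤ Δ (Δ u) x) :
    0 ≤ ∫ x in ball 0 1, u x ∂μ := by
  have hdim : (0 : ℝ) < finrank ℝ E := Nat.cast_pos.2 finrank_pos
  have hpos : 0 ≤ ∫ x in ball 0 1, plateDeflection E x * Δ (Δ u) x ∂μ :=
    setIntegral_nonneg measurableSet_ball fun x hx => mul_nonneg (sq_nonneg _) (hΔ x hx)
  rw [h0.integral_plateDeflection_mul_bilaplacian hu] at hpos
  exact nonneg_of_mul_nonneg_right hpos (by positivity)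

end Haar

/-- `u` solves the Dirichlet mean field problem with parameter `ρ` on the open unit ball of the
Euclidean space `E`. -/
structure IsMeanFieldSolution (ρ : ℝ) (u : E → ℝ) : Prop where
  contDiffOn : ContDiffOn ℝ 4 u (closedBall 0 1)
  bilaplacian_eq : ∀ x ∈ ball (0 : E) 1,
    Δ (Δ u) x = ρ * Real.exp (u x) / ∫ y in ball (0 : E) 1, Real.exp (u y)
  isClamped : IsClamped (closedBall 0 1) u

theorem IsMeanFieldSolution.volume_ball_le_integral_exp [Nontrivial E] {ρ : ℝ} (hρ : 0 ≤ ρ)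
    (hu : IsMeanFieldSolution ρ u) :
    volume.real (ball (0 : E) 1) ≤ ∫ x in ball (0 : E) 1, Real.exp (u x) := by
  have hint {v : E → ℝ} (hv : ContinuousOn v (closedBall 0 1)) : IntegrableOn v (ball 0 1) :=
    (hv.integrableOn_compact (isCompact_closedBall 0 1)).mono_set ball_subset_closedBall
  have hcont : ContinuousOn u (closedBall 0 1) := hu.contDiffOn.continuousOn
  have hnonneg : 0 ≤ ∫ x in ball (0 : E) 1, u x :=
    hu.isClamped.integral_ball_nonneg hu.contDiffOn fun x hx => by
      rw [hu.bilaplacian_eq x hx]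
      positivity
  have : IsFiniteMeasure (volume.restrict (ball (0 : E) 1)) :=
    isFiniteMeasure_restrict.2 measure_ball_lt_top.ne
  rw [← measureReal_restrict_apply_univ]
  exact measureReal_univ_le_integral_exp (hint hcont) (hint hcont.rexp) hnonneg

theorem mean_field_alpha_lower_bound_general [Nontrivial E] {ι : Type*} {Λ : ℝ} {ρ : ι → ℝ}
    {u : ι → E → ℝ} (hρ : ∀ i, ρ i ≤ Λ) (hu : ∀ i, IsMeanFieldSolution (ρ i) (u i)) :
    ∃ c > (0 : ℝ), ∀ i, c * ρ i ≤ ∫ x in ball (0 : E) 1, Real.exp (u i x) := by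
  have hvol : 0 < volume.real (ball (0 : E) 1) :=
    ENNReal.toReal_pos (measure_ball_pos volume 0 one_pos).ne' measure_ball_lt_top.ne
  have hmax : 0 < max Λ 1 := lt_max_of_lt_right one_pos
  refine ⟨volume.real (ball (0 : E) 1) / max Λ 1, by positivity, fun i => ?_⟩
  rcases le_total (ρ i) 0 with hneg | hnonneg
  · exact (mul_nonpos_of_nonneg_of_nonpos (by positivity) hneg).trans (by positivity)
  · calc volume.real (ball (0 : E) 1) / max Λ 1 * ρ i
        ≤ volume.real (ball (0 : E) 1) / max Λ 1 * max Λ 1 := by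
          gcongr
          exact (hρ i).trans (le_max_left Λ 1)
      _ = volume.real (ball (0 : E) 1) := div_mul_cancel₀ _ hmax.ne'
      _ ≤ _ := (hu i).volume_ball_le_integral_exp hnonneg

end MeanField

section EuclideanSpaceFour

variable {f : EuclideanSpace ℝ (Fin 4) → ℝ} {x : EuclideanSpace ℝ (Fin 4)}

theorem lap_eq_laplacian (hf : ContDiffAt ℝ 2 f x) : lap f x = Δ f x := by
  rw [← laplacianWithin_univ, laplacianWithin_eq_sum_fderivWithin
    (EuclideanSpace.basisFun (Fin 4) ℝ) hf.contDiffWithinAt uniqueDiffOn_univ (mem_univ x)]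
  simp only [lap, fderivWithin_univ, EuclideanSpace.basisFun_apply]

theorem lap_lap_eq_laplacian_laplacian (hf : ContDiffAt ℝ 4 f x) : lap (lap f) x = Δ (Δ f) x := by
  have heq : lap f =ᶠ[𝓝 x] Δ f :=
    (hf.eventually (by simp)).mono fun y hy => lap_eq_laplacian (hy.of_le (by norm_num))
  have hlap : ContDiffAt ℝ 2 (Δ f) x := by
    rw [← laplacianWithin_univ, ← contDiffWithinAt_univ]
    exact contDiffWithinAt_laplacianWithin hf.contDiffWithinAt uniqueDiffOn_univ (mem_univ x)
      (by norm_num)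
  rw [lap_eq_laplacian (hlap.congr_of_eventuallyEq heq), (laplacian_congr_nhds heq).eq_of_nhds]

theorem IsMFSolution.isMeanFieldSolution {ρ : ℝ} (hf : IsMFSolution ρ f) :
    IsMeanFieldSolution ρ f where
  contDiffOn := hf.1
  bilaplacian_eq x hx := by
    rw [← hf.2.1 x hx, lap_lap_eq_laplacian_laplacian
      (hf.1.contDiffAt (mem_of_superset (isOpen_ball.mem_nhds hx) ball_subset_closedBall))]
  isClamped x hx := hf.2.2 x <| by
    rwa [frontier_closedBall _ one_ne_zero, mem_sphere_zero_iff_norm] at hx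

end EuclideanSpaceFour

end MeanFieldBound

/-- Lower bound on `α_k = log((∫_B e^{u_k})/ρ_k)`: there is `c > 0` with
`∫_B e^{u_k} ≥ c ρ_k` for all `k`. -/
theorem mean_field_alpha_lower_bound (Λ : ℝ) (hΛ : 0 < Λ)
    (ρ : ℕ → ℝ) (u : ℕ → EuclideanSpace ℝ (Fin 4) → ℝ)
    (hρ : ∀ k, 0 < ρ k ∧ ρ k ≤ Λ)
    (hsol : ∀ k, IsMFSolution (ρ k) (u k)) :
    ∃ c > (0:ℝ), ∀ k,
      c * ρ k ≤ ∫ x in ball (0 : EuclideanSpace ℝ (Fin 4)) 1, Real.exp (u k x) :=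
  mean_field_alpha_lower_bound_general (fun k => (hρ k).2) fun k => (hsol k).isMeanFieldSolution

end
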